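/- Fix l ≥ 2 and matrices A₁, …, A_l ∈ SU(2). For symmetric l×l matrices α = (α_{ij}) and β = (β_{ij}) of natural numbers with zero diagonal, let Ξ[α] = ∏_{i<j} (u_i^{(1)}u_j^{(2)} − u_i^{(2)}u_j^{(1)})^{α_{ij}}, a polynomial in the 2l complex variables u_j^{(1)}, u_j^{(2)} (j = 1,…,l), and let Φ[α,β](A₁,…,A_l) = ⟨f, Ξ[β]⟩ where f(u₁,…,u_l) = Ξ[α](u₁A₁, …, u_lA_l), the inner product being the Fock inner product. Let 𝐓 = (t_{ij}) and 𝐓' = (t'_{ij}) be skew-symmetric real l×l matrices, let T and T' be the 2l×2l matrices with 2×2 blocks T_{ij} = t_{ij}·[[0,1],[−1,0]] and T'_{ij} = t'_{ij}·[[0,1],[−1,0]], and let U be the block-diagonal 2l×2l matrix with blocks A₁, …, A_l. Then there exists ε > 0 such that whenever all |t_{ij}| < ε and |t'_{ij}| < ε, the series S = Σ_{α} Σ_{β} (∏_{i<j} t_{ij}^{α_{ij}} t'_{ij}^{β_{ij}} / (α_{ij}!·β_{ij}!)) · Φ[α,β](A₁,…,A_l), summed over all pairs of symmetric natural-number matrices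 with zero diagonal, converges and satisfies S² · det(1 − U·T·Uᵗ·T') = 1, i.e. S = det(1 − U·T·Uᵗ·T')^{−1/2}. -/

import Mathlib

set_option autoImplicit false

open MvPolynomial Matrix

/-- The Fock inner product on polynomials in the `2l` variables `u_j^{(1)}, u_j^{(2)}`:
monomials are pairwise orthogonal and `‖∏ variablesᵏ‖² = ∏ k!`. -/
noncomputable def fockInnerL {l : ℕ} (f g : MvPolynomial (Fin l × Fin 2) ℂ) : ℂ :=
  ∑ d ∈ f.support, f.coeff d * star (g.coeff d) * ∏ i, ((d i).factorial : ℂ)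

/-- `Ξ[α] = ∏_{i<j} (u_i^{(1)}u_j^{(2)} − u_i^{(2)}u_j^{(1)})^{α_{ij}}`. -/
noncomputable def XiL {l : ℕ} (α : Matrix (Fin l) (Fin l) ℕ) :
    MvPolynomial (Fin l × Fin 2) ℂ :=
  ∏ p ∈ Finset.univ.filter (fun p : Fin l × Fin l => p.1 < p.2),
    (X (p.1, 0) * X (p.2, 1) - X (p.1, 1) * X (p.2, 0)) ^ α p.1 p.2

/-- The action `f(u₁,…,u_l) ↦ f(u₁A₁,…,u_lA_l)`. -/
noncomputable def actL {l : ℕ} (A : Fin l → Matrix (Fin 2) (Fin 2) ℂ)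
    (f : MvPolynomial (Fin l × Fin 2) ℂ) : MvPolynomial (Fin l × Fin 2) ℂ :=
  MvPolynomial.aeval
    (fun v : Fin l × Fin 2 =>
      C (A v.1 0 v.2) * X (v.1, 0) + C (A v.1 1 v.2) * X (v.1, 1)) f

/-- The matrix coefficient `Φ[α,β](A₁,…,A_l) = ⟨(⊗T(A_j))Ξ[α], Ξ[β]⟩`. -/
noncomputable def PhiL {l : ℕ} (α β : Matrix (Fin l) (Fin l) ℕ)
    (A : Fin l → Matrix (Fin 2) (Fin 2) ℂ) : ℂ :=
  fockInnerL (actL A (XiL α)) (XiL β)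

/-- Symmetric `l×l` matrices of natural numbers with zero diagonal. -/
def SymZeroDiag (l : ℕ) : Type :=
  {M : Matrix (Fin l) (Fin l) ℕ // M.transpose = M ∧ ∀ i, M i i = 0}

/-- The `2l×2l` matrix with `2×2` blocks `t_{ij}·[[0,1],[−1,0]]`. -/
noncomputable def blockT {l : ℕ} (t : Matrix (Fin l) (Fin l) ℝ) :
    Matrix (Fin l × Fin 2) (Fin l × Fin 2) ℂ :=
  Matrix.of fun p q => (t p.1 q.1 : ℂ) * !![0, 1; -1, 0] p.2 q.2

/-- The block-diagonal `2l×2l` matrix with diagonal blocks `A₁,…,A_l`. -/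
noncomputable def blockDiagU {l : ℕ} (A : Fin l → Matrix (Fin 2) (Fin 2) ℂ) :
    Matrix (Fin l × Fin 2) (Fin l × Fin 2) ℂ :=
  Matrix.of fun p q => if p.1 = q.1 then A p.1 p.2 q.2 else 0

set_option linter.unusedSectionVars false


section fock
variable {σ : Type*} [Fintype σ] [DecidableEq σ]

/-- The bilinear Fock pairing. -/
noncomputable def fB : MvPolynomial σ ℂ →ₗ[ℂ] MvPolynomial σ ℂ →ₗ[ℂ] ℂ :=
  (basisMonomials σ ℂ).constr ℂ (fun d => (∏ i, ((d i).factorial : ℂ)) • lcoeff ℂ d)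

theorem fB_monomial (d : σ →₀ ℕ) (g : MvPolynomial σ ℂ) :
    fB (monomial d 1) g = (∏ i, ((d i).factorial : ℂ)) * coeff d g := by
  have : (monomial d (1:ℂ)) = basisMonomials σ ℂ d := by simp
  rw [fB, this, Module.Basis.constr_basis]
  simp [lcoeff]

theorem fB_eq (f g : MvPolynomial σ ℂ) :
    fB f g = ∑ d ∈ f.support, f.coeff d * g.coeff d * ∏ i, ((d i).factorial : ℂ) := by
  conv_lhs => rw [f.as_sum]
  rw [map_sum, LinearMap.sum_apply]
  refine Finset.sum_congr rfl fun d _ => ?_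
  have : monomial d (coeff d f) = (coeff d f) • monomial d (1:ℂ) := by
    rw [smul_monomial]; simp
  rw [this, map_smul, LinearMap.smul_apply, fB_monomial]
  simp only [smul_eq_mul]; ring

theorem fB_symm (f g : MvPolynomial σ ℂ) : fB f g = fB g f := by
  rw [fB_eq, fB_eq]
  have h : ∀ f g : MvPolynomial σ ℂ, ∑ d ∈ f.support, f.coeff d * g.coeff d * ∏ i, ((d i).factorial : ℂ)
      = ∑ d ∈ f.support ∪ g.support, f.coeff d * g.coeff d * ∏ i, ((d i).factorial : ℂ) := by
    intro f g
    refine Finset.sum_subset Finset.subset_union_left fun d _ hd => ?_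
    rw [notMem_support_iff.1 hd]; simp
  rw [h f g, h g f, Finset.union_comm]
  refine Finset.sum_congr rfl fun d _ => by ring

theorem fB_X_mul (i : σ) (f g : MvPolynomial σ ℂ) : fB (X i * f) g = fB f (pderiv i g) := by
  induction f using MvPolynomial.induction_on' with
  | add p q hp hq => simp [mul_add, hp, hq]
  | monomial d a =>
    have h1 : monomial d a = a • monomial d (1:ℂ) := by
      rw [smul_monomial]; simp
    have h2 : X i * monomial d (1:ℂ) = monomial (d + Finsupp.single i 1) 1 := by
      rw [X, monomial_mul, one_mul, add_comm]
    rw [h1, mul_smul_comm, map_smul, map_smul, LinearMap.smul_apply, LinearMap.smul_apply, h2,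
      fB_monomial, fB_monomial, coeff_pderiv]
    have h3 : ∏ j, ((((d + Finsupp.single i 1 : σ →₀ ℕ) j).factorial : ℕ) : ℂ)
        = (∏ j, ((d j).factorial : ℂ)) * (d i + 1) := by
      rw [← Finset.mul_prod_erase _ _ (Finset.mem_univ i),
        ← Finset.mul_prod_erase _ (fun j => ((d j).factorial : ℂ)) (Finset.mem_univ i)]
      have : ∏ j ∈ Finset.univ.erase i, ((((d + Finsupp.single i 1 : σ →₀ ℕ) j).factorial : ℕ) : ℂ)
          = ∏ j ∈ Finset.univ.erase i, ((d j).factorial : ℂ) := by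
        refine Finset.prod_congr rfl fun j hj => ?_
        simp [Finsupp.single_eq_of_ne (Finset.ne_of_mem_erase hj)]
      rw [this]
      simp [Nat.factorial_succ]
      ring
    rw [h3]; congr 1; ring

/-- quadratic form polynomial -/
noncomputable def qf (M : Matrix σ σ ℂ) : MvPolynomial σ ℂ :=
  C (1/2) * ∑ i, ∑ j, C (M i j) * (X i * X j)

theorem pderiv_qf (M : Matrix σ σ ℂ) (hM : M.transpose = M) (k : σ) :
    pderiv k (qf M) = ∑ j, C (M k j) * X j := by
  have hs : ∀ i j, M i j = M j i := fun i j => congrFun (congrFun hM j) i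
  rw [qf, pderiv_C_mul, map_sum]
  have : ∀ i, pderiv k (∑ j, C (M i j) * (X i * X j : MvPolynomial σ ℂ))
      = (if k = i then ∑ j, C (M i j) * X j else 0) + C (M i k) * X i := by
    intro i
    have h1 : ∀ j, pderiv k (C (M i j) * (X i * X j : MvPolynomial σ ℂ))
        = (if k = i then C (M i j) * X j else 0) + (if k = j then C (M i j) * X i else 0) := by
      intro j
      rw [pderiv_C_mul, pderiv_mul, pderiv_X, pderiv_X]
      simp only [Pi.single_apply, @eq_comm _ i k, @eq_comm _ j k]
      split_ifs <;> ring
    rw [map_sum, Finset.sum_congr rfl (fun j _ => h1 j), Finset.sum_add_distrib]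
    congr 1
    · split_ifs <;> simp
    · simp
  simp only [this, Finset.sum_add_distrib, Finset.sum_ite_eq, Finset.mem_univ, if_true]
  have h5 : ∑ x, C (M x k) * X x = ∑ j, C (M k j) * (X j : MvPolynomial σ ℂ) :=
    Finset.sum_congr rfl (fun i _ => by rw [hs i k])
  rw [h5, ← two_mul, ← mul_assoc]
  have : (C (1/2) * 2 : MvPolynomial σ ℂ) = 1 := by
    rw [show (2 : MvPolynomial σ ℂ) = C 2 from (map_ofNat C 2).symm, ← C_mul]; norm_num
  rw [this, one_mul]

/-- `q^n/n!` -/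
noncomputable def ep (q : MvPolynomial σ ℂ) (n : ℕ) : MvPolynomial σ ℂ :=
  C (1 / (n.factorial : ℂ)) * q ^ n

theorem ep_succ_mul (q : MvPolynomial σ ℂ) (n : ℕ) :
    ((n : ℂ) + 1) • ep q (n+1) = q * ep q n := by
  rw [ep, ep, smul_eq_C_mul, ← mul_assoc, ← C_mul, Nat.factorial_succ, pow_succ]
  have : ((n : ℂ) + 1) * (1 / (((n + 1) * n.factorial : ℕ) : ℂ)) = 1 / (n.factorial : ℂ) := by
    have h1 : (n.factorial : ℂ) ≠ 0 := by exact_mod_cast n.factorial_ne_zero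
    have h2 : (n : ℂ) + 1 ≠ 0 := by exact_mod_cast n.succ_ne_zero
    push_cast
    field_simp
  rw [this]; ring

theorem pderiv_ep (q : MvPolynomial σ ℂ) (n : ℕ) (k : σ) :
    pderiv k (ep q (n+1)) = pderiv k q * ep q n := by
  have h2 : (n : ℂ) + 1 ≠ 0 := by exact_mod_cast n.succ_ne_zero
  have h := congrArg (fun f => C (1 / (n.factorial : ℂ)) * f) (pderiv_pow (i := k) (f := q) (n := n+1))
  have h3 := congrArg (pderiv k) (ep_succ_mul q n)
  rw [ep, ep, ← mul_assoc, mul_comm q, mul_assoc, ← pow_succ', Derivation.map_smul, pderiv_C_mul, pderiv_C_mul] at h3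
  simp only [h, Nat.add_sub_cancel] at h3
  have h4 : C ((n:ℂ)+1) * (C (1 / ((n+1).factorial : ℂ)) * pderiv k (q ^ (n+1))) = C ((n:ℂ)+1) * (pderiv k q * ep q n) := by
    rw [← smul_eq_C_mul, h3, ep]; push_cast; simp only [map_add, map_one, C_eq_coe_nat]
    ring
  rw [ep, pderiv_C_mul]
  exact mul_left_cancel₀ (fun h => h2 (C_injective _ _ (h.trans C_0.symm))) h4

theorem pderiv_ep_zero (q : MvPolynomial σ ℂ) (k : σ) :
    pderiv k (ep q 0) = 0 := by
  simp [ep]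

variable (M N : Matrix σ σ ℂ)

noncomputable def Kc (n : ℕ) : Matrix σ σ ℂ :=
  Matrix.of fun i j => fB (X i * (X j * ep (qf M) n)) (ep (qf N) (n+1))

noncomputable def Pc (n : ℕ) : ℂ := fB (ep (qf M) n) (ep (qf N) n)

theorem fB_C_mul (a : ℂ) (f g : MvPolynomial σ ℂ) : fB (C a * f) g = a * fB f g := by
  rw [← smul_eq_C_mul]; simp

theorem fB_C_mul_right (a : ℂ) (f g : MvPolynomial σ ℂ) : fB f (C a * g) = a * fB f g := by
  rw [← smul_eq_C_mul]; simp

theorem Kc_symm (n : ℕ) (i j : σ) : Kc M N n i j = Kc M N n j i := by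
  simp only [Kc, Matrix.of_apply]
  rw [mul_left_comm]

theorem Kc_aux (hN : N.transpose = N) (n : ℕ) (i j : σ) :
    Kc M N n i j = ∑ k, N i k * fB (pderiv k (X j * ep (qf M) n)) (ep (qf N) n) := by
  simp only [Kc, Matrix.of_apply]
  rw [fB_X_mul, pderiv_ep, pderiv_qf N hN, Finset.sum_mul, map_sum]
  refine Finset.sum_congr rfl fun k _ => ?_
  rw [mul_assoc, fB_C_mul_right, fB_symm, fB_X_mul, fB_symm]

theorem Kc_zero (hN : N.transpose = N) : Kc M N 0 = Pc M N 0 • N := by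
  ext i j
  rw [Kc_aux M N hN]
  simp only [pderiv_mul, pderiv_ep_zero, mul_zero, add_zero, pderiv_X, Pi.single_apply, Matrix.smul_apply, smul_eq_mul]
  rw [Finset.sum_eq_single j]
  · simp [Pc]; ring
  · intro k _ hk; simp [hk.symm]
  · simp

theorem Kc_succ (hM : M.transpose = M) (hN : N.transpose = N) (n : ℕ) :
    Kc M N (n+1) = Pc M N (n+1) • N + (N * M) * Kc M N n := by
  ext i j
  rw [Kc_aux M N hN, Matrix.add_apply, Matrix.mul_assoc, Matrix.mul_apply]
  simp only [pderiv_mul, pderiv_ep, pderiv_X, Pi.single_apply, Matrix.smul_apply, smul_eq_mul, map_add,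
    LinearMap.add_apply, mul_add, Finset.sum_add_distrib]
  congr 1
  · rw [Finset.sum_eq_single j]
    · simp [Pc]; ring
    · intro k _ hk; simp [hk.symm]
    · simp
  · refine Finset.sum_congr rfl fun k _ => ?_
    congr 1
    rw [pderiv_qf M hM, Finset.sum_mul, Finset.mul_sum, map_sum, LinearMap.sum_apply, Matrix.mul_apply]
    refine Finset.sum_congr rfl fun m _ => ?_
    rw [mul_assoc, mul_left_comm, fB_C_mul, mul_left_comm]
    rfl

theorem Pc_succ (n : ℕ) : 2 * (Pc M N (n+1) * ((n:ℂ)+1)) = Matrix.trace (M * Kc M N n) := by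
  have h : Pc M N (n+1) * ((n:ℂ)+1) = fB (((n:ℂ)+1) • ep (qf M) (n+1)) (ep (qf N) (n+1)) := by
    rw [map_smul, LinearMap.smul_apply, Pc, smul_eq_mul, mul_comm]
  rw [h, ep_succ_mul, qf, mul_assoc, fB_C_mul, Finset.sum_mul, map_sum, LinearMap.sum_apply,
    ← mul_assoc]
  norm_num
  simp only [Matrix.trace, Matrix.diag, Matrix.mul_apply]
  refine Finset.sum_congr rfl fun i _ => ?_
  rw [Finset.sum_mul, map_sum, LinearMap.sum_apply]
  refine Finset.sum_congr rfl fun j _ => ?_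
  rw [mul_assoc, fB_C_mul, Kc_symm, mul_assoc]
  rfl

theorem Pc_zero : Pc M N 0 = 1 := by
  have : ep (qf M) 0 = monomial 0 1 := by simp [ep]
  rw [Pc, this, fB_monomial]
  simp [ep]

end fock
theorem deriv_prod_aux {k R : Type*} [CommRing k] [CommRing R] [Algebra k R] {ι : Type*} [DecidableEq ι] (D : Derivation k R R) (s : Finset ι) (f : ι → R) :
    D (∏ i ∈ s, f i) = ∑ i ∈ s, D (f i) * ∏ j ∈ s.erase i, f j := by
  induction s using Finset.induction_on with
  | empty => simp
  | insert a s ha ih =>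
    rw [Finset.prod_insert ha, D.leibniz, ih, Finset.sum_insert ha, Finset.erase_insert ha]
    simp only [smul_eq_mul]
    rw [add_comm, mul_comm, Finset.mul_sum]
    congr 1
    refine Finset.sum_congr rfl fun i hi => ?_
    rw [Finset.erase_insert_of_ne (by rintro rfl; exact ha hi), Finset.prod_insert (by simp [ha])]
    ring

theorem deriv_det {k R : Type*} [CommRing k] [CommRing R] [Algebra k R] {n : Type*} [DecidableEq n] [Fintype n] (D : Derivation k R R)
    (A : Matrix n n R) : D A.det = Matrix.trace (A.map D * A.adjugate) := by
  have h1 : Matrix.trace (A.map D * A.adjugate) = ∑ i, (A.updateRow i (fun j => D (A i j))).det := by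
    simp only [Matrix.trace, Matrix.diag, Matrix.mul_apply]
    refine Finset.sum_congr rfl fun i _ => ?_
    rw [← Matrix.cramer_transpose_apply, Matrix.cramer_eq_adjugate_mulVec, ← Matrix.adjugate_transpose]
    simp only [Matrix.mulVec, dotProduct, Matrix.transpose_apply, Matrix.map_apply]
    exact Finset.sum_congr rfl fun j _ => mul_comm _ _
  rw [h1]
  have h2 : ∀ i, (A.updateRow i (fun j => D (A i j))).det = ∑ τ : Equiv.Perm n, Equiv.Perm.sign τ • (D (A i (τ i)) * ∏ j ∈ Finset.univ.erase i, A j (τ j)) := by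
    intro i
    rw [← Matrix.det_transpose, Matrix.det_apply]
    refine Finset.sum_congr rfl fun τ _ => ?_
    rw [← Finset.mul_prod_erase _ _ (Finset.mem_univ i)]
    congr 2
    · simp
    · refine Finset.prod_congr rfl fun j hj => ?_
      simp [Matrix.updateRow_ne (Finset.ne_of_mem_erase hj)]
  simp only [h2]
  rw [Finset.sum_comm, ← Matrix.det_transpose, Matrix.det_apply, map_sum]
  refine Finset.sum_congr rfl fun τ _ => ?_
  rw [← Finset.smul_sum, ← deriv_prod_aux]
  simp only [Units.smul_def, Matrix.transpose_apply]
  rw [map_zsmul]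

open PowerSeries in
theorem ps_main {n : Type*} [DecidableEq n] [Fintype n] (M N : Matrix n n ℂ)
    (P : ℂ⟦X⟧) (K : Matrix n n ℂ⟦X⟧) (hP0 : PowerSeries.constantCoeff P = 1)
    (hK : K = P • N.map (PowerSeries.C) + (PowerSeries.X : ℂ⟦X⟧) • ((N * M).map PowerSeries.C * K))
    (hP : (2:ℂ⟦X⟧) * PowerSeries.derivative ℂ P = Matrix.trace (M.map PowerSeries.C * K)) :
    P ^ 2 * (1 - (PowerSeries.X : ℂ⟦X⟧) • (N * M).map PowerSeries.C).det = 1 := by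
  set W : Matrix n n ℂ⟦X⟧ := (N * M).map PowerSeries.C with hW
  set Q := 1 - (PowerSeries.X : ℂ⟦X⟧) • W with hQ
  have hK1 : Q * K = P • N.map (PowerSeries.C) := by
    rw [hQ, sub_mul, one_mul, Matrix.smul_mul, sub_eq_iff_eq_add]; exact hK
  have hK2 : Q.det • K = P • (Q.adjugate * N.map (PowerSeries.C)) := by
    rw [← Matrix.mul_smul, ← hK1, ← mul_assoc, Matrix.adjugate_mul, Matrix.smul_mul, one_mul]
  have hd : PowerSeries.derivative ℂ Q.det = - Matrix.trace (W * Q.adjugate) := by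
    have := deriv_det (PowerSeries.derivative ℂ) Q
    rw [this, ← Matrix.trace_neg, ← neg_mul]
    congr 2
    ext1 i j
    simp only [Matrix.map_apply, hQ, hW, Matrix.sub_apply, Matrix.smul_apply, Matrix.neg_apply, smul_eq_mul, map_sub, Derivation.leibniz, PowerSeries.derivative_C, PowerSeries.derivative_X, Matrix.one_apply]
    split_ifs <;> simp
  have h3 : Q.det * (2 * PowerSeries.derivative ℂ P) = - P * PowerSeries.derivative ℂ Q.det := by
    rw [hP, hd, ← smul_eq_mul, ← Matrix.trace_smul, ← Matrix.mul_smul, hK2, Matrix.mul_smul, Matrix.trace_smul, smul_eq_mul,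
      neg_mul_neg, ← mul_assoc, Matrix.trace_mul_comm, hW, Matrix.map_mul, mul_assoc]
  apply PowerSeries.derivative.ext
  · rw [Derivation.leibniz, Derivation.leibniz_pow, Derivation.map_one_eq_zero]
    simp only [smul_eq_mul, nsmul_eq_mul]
    linear_combination P * h3
  · rw [map_mul, map_pow, hP0, map_one, RingHom.map_det]
    have : PowerSeries.constantCoeff.mapMatrix Q = 1 := by
      ext i j
      simp only [hQ, RingHom.mapMatrix_apply, Matrix.map_apply, Matrix.sub_apply, Matrix.smul_apply,
        smul_eq_mul, Matrix.one_apply]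
      split_ifs <;> simp
    rw [this]; simp

open PowerSeries in
theorem ps_Pc {σ : Type*} [Fintype σ] [DecidableEq σ] (M N : Matrix σ σ ℂ)
    (hM : M.transpose = M) (hN : N.transpose = N) :
    (PowerSeries.mk (Pc M N)) ^ 2 * (1 - (PowerSeries.X : ℂ⟦X⟧) • (N * M).map PowerSeries.C).det = 1 := by
  refine ps_main M N _ (Matrix.of fun i j => PowerSeries.mk (fun n => Kc M N n i j)) ?_ ?_ ?_
  · simp [Pc_zero]
  · ext i j n
    simp only [Matrix.of_apply, Matrix.add_apply, Matrix.smul_apply, smul_eq_mul, Matrix.map_apply, map_add,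
      PowerSeries.coeff_mk, PowerSeries.coeff_mul_C]
    cases n with
    | zero => simp [Kc_zero M N hN]
    | succ n =>
      rw [Kc_succ M N hM hN, PowerSeries.coeff_succ_X_mul, Matrix.mul_apply, map_sum]
      simp only [Matrix.map_apply, Matrix.of_apply, PowerSeries.coeff_C_mul, PowerSeries.coeff_mk,
        Matrix.add_apply, Matrix.smul_apply, smul_eq_mul]
      rw [Matrix.mul_apply]
  · ext n
    rw [two_mul, map_add, PowerSeries.coeff_derivative, PowerSeries.coeff_mk, ← two_mul, Pc_succ]
    simp [Matrix.trace, Matrix.mul_apply]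

theorem ev_mul (p q : PowerSeries ℂ) (hp : Summable fun n => ‖PowerSeries.coeff n p‖)
    (hq : Summable fun n => ‖PowerSeries.coeff n q‖) :
    (Summable fun n => ‖PowerSeries.coeff n (p * q)‖) ∧
    ∑' n, PowerSeries.coeff n (p * q) = (∑' n, PowerSeries.coeff n p) * ∑' n, PowerSeries.coeff n q := by
  constructor
  · simpa [PowerSeries.coeff_mul] using summable_norm_sum_mul_antidiagonal_of_summable_norm hp hq
  · simpa [PowerSeries.coeff_mul] using
      (tsum_mul_tsum_eq_tsum_sum_antidiagonal_of_summable_norm hp hq).symm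

open PowerSeries in
theorem ev_det {σ : Type*} [Fintype σ] [DecidableEq σ] (W : Matrix σ σ ℂ) :
    (Summable fun n => ‖PowerSeries.coeff n (1 - (PowerSeries.X : ℂ⟦X⟧) • W.map PowerSeries.C).det‖) ∧
    ∑' n, PowerSeries.coeff n (1 - (PowerSeries.X : ℂ⟦X⟧) • W.map PowerSeries.C).det = (1 - W).det := by
  set D : Polynomial ℂ := (1 - (Polynomial.X : Polynomial ℂ) • W.map Polynomial.C).det with hD
  have h1 : (1 - (PowerSeries.X : ℂ⟦X⟧) • W.map PowerSeries.C).det = (D : ℂ⟦X⟧) := by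
    have := RingHom.map_det (Polynomial.coeToPowerSeries.ringHom (R := ℂ)) (1 - (Polynomial.X : Polynomial ℂ) • W.map Polynomial.C)
    rw [Polynomial.coeToPowerSeries.ringHom_apply] at this
    rw [hD, this]
    congr 1
    ext1 i j
    simp only [RingHom.mapMatrix_apply, Matrix.map_apply, Matrix.sub_apply, Matrix.smul_apply,
        smul_eq_mul, Matrix.one_apply]
    split_ifs <;> simp <;> exact mul_comm _ _
  have h2 : D.eval 1 = (1 - W).det := by
    have := RingHom.map_det (Polynomial.evalRingHom (1:ℂ)) (1 - (Polynomial.X : Polynomial ℂ) • W.map Polynomial.C)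
    rw [Polynomial.coe_evalRingHom] at this
    rw [hD, this]
    congr 1
    ext1 i j
    simp only [RingHom.mapMatrix_apply, Matrix.map_apply, Matrix.sub_apply, Matrix.smul_apply,
        smul_eq_mul, Matrix.one_apply]
    split_ifs <;> simp
  have h3 : ∀ n ∉ Finset.range (D.natDegree + 1), D.coeff n = 0 := by
    intro n hn
    apply Polynomial.coeff_eq_zero_of_natDegree_lt
    simp at hn; omega
  simp only [h1, Polynomial.coeff_coe]
  constructor
  · exact summable_of_ne_finset_zero (s := Finset.range (D.natDegree + 1)) (fun n hn => by simp [h3 n hn])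
  · rw [tsum_eq_sum h3, ← h2, Polynomial.eval_eq_sum_range]
    simp

theorem Pc_final {σ : Type*} [Fintype σ] [DecidableEq σ] (M N : Matrix σ σ ℂ)
    (hM : M.transpose = M) (hN : N.transpose = N) (hs : Summable fun n => ‖Pc M N n‖) :
    (∑' n, Pc M N n) ^ 2 * (1 - M * N).det = 1 := by
  have hp : Summable fun n => ‖PowerSeries.coeff n (PowerSeries.mk (Pc M N))‖ := by
    simpa using hs
  have h1 := ev_mul _ _ hp hp
  have h2 := ev_det (N * M)
  have h3 := ev_mul _ _ h1.1 h2.1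
  have h4 := h3.2
  rw [← pow_two, ps_Pc M N hM hN, pow_two, h1.2, h2.2] at h4
  simp only [PowerSeries.coeff_mk] at h4
  rw [Matrix.det_one_sub_mul_comm, pow_two, ← h4, tsum_eq_single 0]
  · simp
  · intro n hn; simp [PowerSeries.coeff_one, hn]
section bounds
variable {σ : Type*} [Fintype σ] [DecidableEq σ]

/-- sum of the absolute values of the coefficients -/
noncomputable def nn (f : MvPolynomial σ ℂ) : ℝ := ∑ d ∈ f.support, ‖f.coeff d‖

theorem nn_eq (f : MvPolynomial σ ℂ) (s : Finset (σ →₀ ℕ)) (h : f.support ⊆ s) :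
    nn f = ∑ d ∈ s, ‖f.coeff d‖ := by
  refine Finset.sum_subset h fun d _ hd => ?_
  rw [notMem_support_iff.1 hd]; simp

theorem nn_nonneg (f : MvPolynomial σ ℂ) : 0 ≤ nn f := Finset.sum_nonneg fun _ _ => norm_nonneg _

theorem nn_add (f g : MvPolynomial σ ℂ) : nn (f + g) ≤ nn f + nn g := by
  rw [nn_eq (f+g) (f.support ∪ g.support) support_add, nn_eq f _ Finset.subset_union_left,
    nn_eq g _ Finset.subset_union_right, ← Finset.sum_add_distrib]
  exact Finset.sum_le_sum fun d _ => by rw [coeff_add]; exact norm_add_le _ _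

theorem nn_zero : nn (0 : MvPolynomial σ ℂ) = 0 := by simp [nn]

theorem nn_sum {ι : Type*} (s : Finset ι) (f : ι → MvPolynomial σ ℂ) :
    nn (∑ i ∈ s, f i) ≤ ∑ i ∈ s, nn (f i) :=
  Finset.le_sum_of_subadditive nn nn_zero.le nn_add s f

theorem nn_monomial (d : σ →₀ ℕ) (a : ℂ) : nn (monomial d a) = ‖a‖ := by
  rw [nn_eq _ {d} support_monomial_subset]; simp

theorem nn_mul (f g : MvPolynomial σ ℂ) : nn (f * g) ≤ nn f * nn g := by
  have : f * g = ∑ d ∈ f.support, ∑ e ∈ g.support, monomial (d + e) (coeff d f * coeff e g) := by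
    conv_lhs => rw [f.as_sum, g.as_sum, Finset.sum_mul_sum]
    simp only [monomial_mul]
  have h2 : nn f * nn g = ∑ d ∈ f.support, ∑ e ∈ g.support, ‖coeff d f‖ * ‖coeff e g‖ := by
    rw [nn, nn, Finset.sum_mul_sum]
  rw [this, h2]
  refine (nn_sum _ _).trans (Finset.sum_le_sum fun d _ => (nn_sum _ _).trans (Finset.sum_le_sum fun e _ => ?_))
  rw [nn_monomial, norm_mul]

theorem nn_one : nn (1 : MvPolynomial σ ℂ) = 1 := by
  have := nn_monomial (σ := σ) 0 1
  simpa using this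

theorem nn_pow (f : MvPolynomial σ ℂ) (n : ℕ) : nn (f ^ n) ≤ nn f ^ n := by
  induction n with
  | zero => simp [nn_one]
  | succ n ih =>
    rw [pow_succ, pow_succ]
    exact (nn_mul _ _).trans (mul_le_mul_of_nonneg_right ih (nn_nonneg _))

theorem nn_prod {ι : Type*} [Fintype ι] (x : ι → MvPolynomial σ ℂ) (a : ι → ℕ) (c : ℝ)
    (hc : ∀ i, nn (x i) ≤ c) : nn (∏ i, x i ^ a i) ≤ c ^ (∑ i, a i) := by
  classical
  rw [← Finset.prod_pow_eq_pow_sum]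
  have : ∀ s : Finset ι, nn (∏ i ∈ s, x i ^ a i) ≤ ∏ i ∈ s, c ^ a i := by
    intro s
    induction s using Finset.induction_on with
    | empty => simp [nn_one]
    | insert i s hi ih =>
      rw [Finset.prod_insert hi, Finset.prod_insert hi]
      refine (nn_mul _ _).trans (mul_le_mul ?_ ih (nn_nonneg _) ?_)
      · exact (nn_pow _ _).trans (pow_le_pow_left₀ (nn_nonneg _) (hc i) _)
      · exact pow_nonneg ((nn_nonneg _).trans (hc i)) _
  exact this _

theorem fB_bound (f g : MvPolynomial σ ℂ) (n : ℕ) (hf : f.IsHomogeneous n) :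
    ‖fB f g‖ ≤ nn f * nn g * n.factorial := by
  rw [fB_eq, nn, Finset.sum_mul, Finset.sum_mul]
  refine (norm_sum_le _ _).trans (Finset.sum_le_sum fun d hd => ?_)
  rw [norm_mul, norm_mul]
  have h1 : ‖coeff d g‖ ≤ nn g := by
    by_cases h : d ∈ g.support
    · exact Finset.single_le_sum (f := fun d => ‖coeff d g‖) (fun _ _ => norm_nonneg _) h
    · rw [notMem_support_iff.1 h]; simpa using nn_nonneg g
  have h2 : ‖∏ i, ((d i).factorial : ℂ)‖ ≤ n.factorial := by
    have h3 : ∑ i, d i = n := by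
      have := hf (mem_support_iff.1 hd)
      rw [← this, Finsupp.weight_apply, Finsupp.sum_fintype]
      · simp
      · simp
    rw [← h3, ← Nat.cast_prod, Complex.norm_natCast]
    exact_mod_cast Nat.le_of_dvd (Nat.factorial_pos _) (Nat.prod_factorial_dvd_factorial_sum _ _)
  have := nn_nonneg g
  gcongr

theorem fB_homog (f g : MvPolynomial σ ℂ) (n m : ℕ) (hf : f.IsHomogeneous n) (hg : g.IsHomogeneous m)
    (h : n ≠ m) : fB f g = 0 := by
  rw [fB_eq]
  refine Finset.sum_eq_zero fun d hd => ?_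
  have : coeff d g = 0 := by
    by_contra h0
    exact h ((hf (mem_support_iff.1 hd)).symm.trans (hg h0))
  rw [this]; simp

theorem homog_prod {ι : Type*} [Fintype ι] (x : ι → MvPolynomial σ ℂ) (a : ι → ℕ)
    (hx : ∀ i, (x i).IsHomogeneous 2) : (∏ i, x i ^ a i).IsHomogeneous (2 * ∑ i, a i) := by
  rw [Finset.mul_sum]
  exact IsHomogeneous.prod _ _ _ fun i _ => (hx i).pow _

end bounds

theorem factorial_sum_le {ι : Type*} [Fintype ι] [DecidableEq ι] (a : ι → ℕ) :
    (∑ i, a i).factorial ≤ (Fintype.card ι) ^ (∑ i, a i) * ∏ i, (a i).factorial := by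
  rw [← Nat.multinomial_spec, mul_comm]
  refine Nat.mul_le_mul_right _ ?_
  have h := Finset.sum_pow_eq_sum_piAntidiag (R := ℕ) (Finset.univ : Finset ι) (fun _ => 1) (∑ i, a i)
  simp only [Finset.sum_const, Finset.card_univ, smul_eq_mul, mul_one, one_pow, Finset.prod_const_one, Nat.cast_id] at h
  rw [h]
  exact Finset.single_le_sum (f := fun k => Nat.multinomial Finset.univ k) (fun _ _ => Nat.zero_le _)
    (by simp [Finset.mem_piAntidiag])

theorem summable_geom {ι : Type*} [Fintype ι] (r : ℝ) (h0 : 0 ≤ r) (h1 : r < 1) :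
    Summable fun a : ι → ℕ => r ^ (∑ i, a i) := by
  classical
  refine summable_of_sum_le (c := ∏ _i : ι, ∑' n : ℕ, r ^ n) (fun a => pow_nonneg h0 _) fun u => ?_
  set B := u.sup (fun a => ∑ i, a i) + 1
  have hsub : u ⊆ Fintype.piFinset (fun _ : ι => Finset.range B) := by
    intro a ha
    rw [Fintype.mem_piFinset]
    intro i
    rw [Finset.mem_range]
    have h2 : ∑ i, a i ≤ u.sup (fun a => ∑ i, a i) := Finset.le_sup (f := fun a : ι → ℕ => ∑ i, a i) ha
    have h3 : a i ≤ ∑ i, a i := Finset.single_le_sum (fun _ _ => Nat.zero_le _) (Finset.mem_univ i)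
    omega
  refine (Finset.sum_le_sum_of_subset_of_nonneg hsub fun _ _ _ => pow_nonneg h0 _).trans ?_
  simp only [← Finset.prod_pow_eq_pow_sum]
  rw [← Finset.prod_univ_sum]
  refine Finset.prod_le_prod (fun _ _ => Finset.sum_nonneg fun _ _ => pow_nonneg h0 _) fun _ _ => ?_
  exact (summable_geometric_of_lt_one h0 h1).sum_le_tsum _ (fun _ _ => pow_nonneg h0 _)

section main
variable {σ : Type*} [Fintype σ] [DecidableEq σ] {ι : Type*} [Fintype ι] [DecidableEq ι]

noncomputable def term (x y : ι → MvPolynomial σ ℂ) (t t' : ι → ℂ) (ab : (ι → ℕ) × (ι → ℕ)) : ℂ :=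
  (∏ i, t i ^ ab.1 i * t' i ^ ab.2 i / ((ab.1 i).factorial * (ab.2 i).factorial : ℕ)) *
    fB (∏ i, x i ^ ab.1 i) (∏ i, y i ^ ab.2 i)

theorem term_bound (x y : ι → MvPolynomial σ ℂ) (hx : ∀ i, (x i).IsHomogeneous 2)
    (hy : ∀ i, (y i).IsHomogeneous 2) (c : ℝ) (hcx : ∀ i, nn (x i) ≤ c) (hcy : ∀ i, nn (y i) ≤ c)
    (hc : 0 ≤ c) (ε : ℝ) (hε : 0 ≤ ε) (t t' : ι → ℂ) (ht : ∀ i, ‖t i‖ ≤ ε) (ht' : ∀ i, ‖t' i‖ ≤ ε)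
    (a b : ι → ℕ) :
    ‖term x y t t' (a, b)‖ ≤ (ε * (2 * c * Fintype.card ι)) ^ (∑ i, a i) * (ε * (2 * c * Fintype.card ι)) ^ (∑ i, b i) := by
  set m : ℝ := (Fintype.card ι : ℝ)
  by_cases hab : ∑ i, a i = ∑ i, b i
  swap
  · rw [term, fB_homog _ _ _ _ (homog_prod x a hx) (homog_prod y b hy) (by simpa using hab)]
    simp only [mul_zero, norm_zero]
    positivity
  have hB := fB_bound (∏ i, x i ^ a i) (∏ i, y i ^ b i) _ (homog_prod x a hx)
  have h1 := nn_prod x a c hcx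
  have h2 := nn_prod y b c hcy
  set n := ∑ i, a i with hn
  rw [← hab] at h2 ⊢
  have hfac : ((2 * n).factorial : ℝ) ≤ 4 ^ n * (n.factorial * n.factorial) := by
    have e1 : (2 * n).factorial = (2*n).choose n * n.factorial * n.factorial := by
      have := Nat.choose_mul_factorial_mul_factorial (n := 2*n) (k := n) (by omega)
      rw [← this]; congr 2; omega
    have e2 : (2*n).choose n ≤ 4 ^ n := by
      have := Nat.choose_le_two_pow (2*n) n
      rwa [pow_mul] at this
    rw [← mul_assoc]
    exact_mod_cast e1 ▸ Nat.mul_le_mul_right _ (Nat.mul_le_mul_right _ e2)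
  have hfa : (n.factorial : ℝ) ≤ m ^ n * ∏ i, ((a i).factorial : ℝ) := by
    have := factorial_sum_le a
    rw [← hn] at this
    simp only [m]
    exact_mod_cast this
  have hfb : (n.factorial : ℝ) ≤ m ^ n * ∏ i, ((b i).factorial : ℝ) := by
    have := factorial_sum_le b
    rw [← hab] at this
    simp only [m]
    exact_mod_cast this
  have hA : 0 < ∏ i, ((a i).factorial : ℝ) := Finset.prod_pos fun i _ => by positivity
  have hBp : 0 < ∏ i, ((b i).factorial : ℝ) := Finset.prod_pos fun i _ => by positivity
  have hcoef : ‖∏ i, t i ^ a i * t' i ^ b i / ((a i).factorial * (b i).factorial : ℕ)‖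
      ≤ ε ^ n * ε ^ n / ((∏ i, ((a i).factorial : ℝ)) * ∏ i, ((b i).factorial : ℝ)) := by
    rw [norm_prod]
    have : ε ^ n * ε ^ n / ((∏ i, ((a i).factorial : ℝ)) * ∏ i, ((b i).factorial : ℝ))
      = ∏ i, (ε ^ a i * ε ^ b i / ((a i).factorial * (b i).factorial)) := by
      rw [Finset.prod_div_distrib, Finset.prod_mul_distrib, Finset.prod_mul_distrib, Finset.prod_pow_eq_pow_sum,
        Finset.prod_pow_eq_pow_sum, ← hab]
    rw [this]
    refine Finset.prod_le_prod (fun _ _ => norm_nonneg _) fun i _ => ?_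
    rw [norm_div, norm_mul, norm_pow, norm_pow, Complex.norm_natCast]
    push_cast
    have := ht i
    have := ht' i
    gcongr
  set PA := ∏ i, ((a i).factorial : ℝ)
  set PB := ∏ i, ((b i).factorial : ℝ)
  rw [term, norm_mul]
  have hm : 0 ≤ m := by positivity
  have hB2 : ‖fB (∏ i, x i ^ a i) (∏ i, y i ^ b i)‖ ≤ c ^ n * c ^ n * (4 ^ n * ((m ^ n * PA) * (m ^ n * PB))) := by
    refine hB.trans ?_
    have := nn_nonneg (∏ i, y i ^ b i)
    have h5 : ((2 * n).factorial : ℝ) ≤ 4 ^ n * ((m ^ n * PA) * (m ^ n * PB)) := hfac.trans (by gcongr)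
    gcongr
  refine (mul_le_mul hcoef hB2 (norm_nonneg _) (by positivity)).trans (le_of_eq ?_)
  rw [show (4:ℝ) = 2 * 2 by norm_num]
  simp only [mul_pow]
  field_simp

theorem term_summable (x y : ι → MvPolynomial σ ℂ) (hx : ∀ i, (x i).IsHomogeneous 2)
    (hy : ∀ i, (y i).IsHomogeneous 2) : ∃ ε > (0:ℝ), ∀ t t' : ι → ℂ,
      (∀ i, ‖t i‖ ≤ ε) → (∀ i, ‖t' i‖ ≤ ε) → Summable (fun ab => ‖term x y t t' ab‖) := by
  set c : ℝ := ∑ i, nn (x i) + ∑ i, nn (y i) with hcdef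
  have hx0 : 0 ≤ ∑ i, nn (x i) := Finset.sum_nonneg fun i _ => nn_nonneg _
  have hy0 : 0 ≤ ∑ i, nn (y i) := Finset.sum_nonneg fun i _ => nn_nonneg _
  have hc : 0 ≤ c := by positivity
  have hcx : ∀ i, nn (x i) ≤ c := fun i => by
    have := Finset.single_le_sum (f := fun i => nn (x i)) (fun i _ => nn_nonneg _) (Finset.mem_univ i)
    linarith
  have hcy : ∀ i, nn (y i) ≤ c := fun i => by
    have := Finset.single_le_sum (f := fun i => nn (y i)) (fun i _ => nn_nonneg _) (Finset.mem_univ i)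
    linarith
  set C0 : ℝ := 2 * c * Fintype.card ι with hC0
  have hC0' : 0 ≤ C0 := by positivity
  refine ⟨1 / (C0 + 1), by positivity, fun t t' ht ht' => ?_⟩
  have hr0 : 0 ≤ 1 / (C0 + 1) * C0 := by positivity
  have hr1 : 1 / (C0 + 1) * C0 < 1 := by
    rw [one_div_mul_eq_div, div_lt_one (by positivity)]; linarith
  have hg := summable_geom (ι := ι) _ hr0 hr1
  refine Summable.of_nonneg_of_le (fun _ => norm_nonneg _) (fun ab => ?_)
    (hg.mul_of_nonneg hg (fun _ => pow_nonneg hr0 _) (fun _ => pow_nonneg hr0 _))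
  exact term_bound x y hx hy c hcx hcy hc _ (by positivity) t t' ht ht' ab.1 ab.2

theorem ep_sum (x : ι → MvPolynomial σ ℂ) (t : ι → ℂ) (n : ℕ) :
    ep (∑ i, C (t i) * x i) n = ∑ a ∈ Finset.piAntidiag (Finset.univ : Finset ι) n,
      C (∏ i, t i ^ a i / ((a i).factorial : ℂ)) * ∏ i, x i ^ a i := by
  rw [ep, Finset.sum_pow_eq_sum_piAntidiag, Finset.mul_sum]
  refine Finset.sum_congr rfl fun a ha => ?_
  have hn : ∑ i, a i = n := (Finset.mem_piAntidiag.1 ha).1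
  have h1 := Nat.multinomial_spec (Finset.univ : Finset ι) a
  rw [hn] at h1
  have h2 : (∏ i, ((a i).factorial : ℂ)) * (Nat.multinomial Finset.univ a : ℂ) = n.factorial := by
    exact_mod_cast h1
  have hA : (∏ i, ((a i).factorial : ℂ)) ≠ 0 := Finset.prod_ne_zero_iff.2 fun i _ => by
    exact_mod_cast Nat.factorial_ne_zero _
  have hF : (n.factorial : ℂ) ≠ 0 := by exact_mod_cast Nat.factorial_ne_zero _
  simp only [mul_pow, Finset.prod_mul_distrib, ← C_pow, ← map_prod]
  rw [Finset.prod_div_distrib, ← mul_assoc, ← mul_assoc, ← C_eq_coe_nat, ← C_mul, ← C_mul]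
  congr 2
  rw [← h2]
  have hm : (Nat.multinomial Finset.univ a : ℂ) ≠ 0 := by
    intro h; rw [h, mul_zero] at h2; exact hF h2.symm
  field_simp

theorem term_fiber (x y : ι → MvPolynomial σ ℂ) (t t' : ι → ℂ) (n m : ℕ) :
    ∑ ab ∈ Finset.piAntidiag (Finset.univ : Finset ι) n ×ˢ Finset.piAntidiag (Finset.univ : Finset ι) m,
      term x y t t' ab = fB (ep (∑ i, C (t i) * x i) n) (ep (∑ i, C (t' i) * y i) m) := by
  rw [ep_sum, ep_sum, map_sum, Finset.sum_product_right]
  refine Finset.sum_congr rfl fun b _ => ?_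
  rw [map_sum, LinearMap.sum_apply]
  refine Finset.sum_congr rfl fun a _ => ?_
  rw [fB_C_mul, fB_C_mul_right, term, ← mul_assoc, ← Finset.prod_mul_distrib]
  congr 1
  refine Finset.prod_congr rfl fun i _ => ?_
  push_cast
  rw [div_mul_div_comm]

theorem ep_homog (q : MvPolynomial σ ℂ) (hq : q.IsHomogeneous 2) (n : ℕ) :
    (ep q n).IsHomogeneous (2 * n) := by
  have := (isHomogeneous_C σ (1 / (n.factorial : ℂ))).mul (hq.pow n)
  rwa [zero_add] at this

theorem term_hasSum (x y : ι → MvPolynomial σ ℂ) (hx : ∀ i, (x i).IsHomogeneous 2)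
    (hy : ∀ i, (y i).IsHomogeneous 2) (t t' : ι → ℂ) (hs : Summable (fun ab => ‖term x y t t' ab‖))
    (M N : Matrix σ σ ℂ) (hM : qf M = ∑ i, C (t i) * x i) (hN : qf N = ∑ i, C (t' i) * y i) :
    (Summable fun n => ‖Pc M N n‖) ∧ HasSum (term x y t t') (∑' n, Pc M N n) := by
  have hqM : (qf M).IsHomogeneous 2 := by
    rw [hM]; refine IsHomogeneous.sum _ _ _ fun i _ => ?_
    have := (isHomogeneous_C σ (t i)).mul (hx i)
    rwa [zero_add] at this
  have hqN : (qf N).IsHomogeneous 2 := by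
    rw [hN]; refine IsHomogeneous.sum _ _ _ fun i _ => ?_
    have := (isHomogeneous_C σ (t' i)).mul (hy i)
    rwa [zero_add] at this
  have hS : Summable (term x y t t') := hs.of_norm
  let deg : (ι → ℕ) × (ι → ℕ) → ℕ × ℕ := fun ab => (∑ i, ab.1 i, ∑ i, ab.2 i)
  let e := Equiv.sigmaFiberEquiv deg
  have hfib : ∀ p : ℕ × ℕ, HasSum (fun c : {ab // deg ab = p} => term x y t t' c.1)
      (fB (ep (qf M) p.1) (ep (qf N) p.2)) := by
    intro p
    rw [hM, hN, ← term_fiber]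
    have hset : {ab | deg ab = p} = ((Finset.piAntidiag (Finset.univ : Finset ι) p.1 ×ˢ Finset.piAntidiag (Finset.univ : Finset ι) p.2 : Finset _) : Set _) := by
      ext ab
      simp [deg, Finset.mem_piAntidiag, Prod.ext_iff]
    have h0 := Finset.hasSum (Finset.piAntidiag (Finset.univ : Finset ι) p.1 ×ˢ Finset.piAntidiag (Finset.univ : Finset ι) p.2) (term x y t t')
    have h1 : HasSum (fun c : ({ab | deg ab = p} : Set _) => term x y t t' c.1) (∑ ab ∈ Finset.piAntidiag (Finset.univ : Finset ι) p.1 ×ˢ Finset.piAntidiag (Finset.univ : Finset ι) p.2, term x y t t' ab) := by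
      rw [hset]; exact h0
    exact h1
  have hSe : HasSum (fun c : (p : ℕ × ℕ) × {ab // deg ab = p} => term x y t t' c.2.1) (∑' ab, term x y t t' ab) := by
    exact (e.hasSum_iff (f := term x y t t')).2 hS.hasSum
  have hG := hSe.sigma hfib
  have hdiag : ∀ p : ℕ × ℕ, p ∉ Set.range (fun n : ℕ => (n, n)) → fB (ep (qf M) p.1) (ep (qf N) p.2) = 0 := by
    intro p hp
    refine fB_homog _ _ _ _ (ep_homog _ hqM _) (ep_homog _ hqN _) fun h => hp ⟨p.1, ?_⟩
    have : p.1 = p.2 := by omega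
    ext <;> simp [this]
  have hinj : Function.Injective (fun n : ℕ => (n, n)) := fun a b h => (Prod.ext_iff.1 h).1
  have hP : HasSum (Pc M N) (∑' ab, term x y t t' ab) := (hinj.hasSum_iff hdiag).2 hG
  refine ⟨hP.summable.norm, ?_⟩
  rw [hP.tsum_eq]
  exact hS.hasSum

end main
section matching
variable {l : ℕ}

abbrev Pr (l : ℕ) : Type := {p : Fin l × Fin l // p.1 < p.2}

def szEquiv (l : ℕ) : SymZeroDiag l ≃ (Pr l → ℕ) where
  toFun M := fun p => M.1 p.1.1 p.1.2
  invFun a := ⟨Matrix.of fun i j => if h : i < j then a ⟨(i, j), h⟩ else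
      if h' : j < i then a ⟨(j, i), h'⟩ else 0, by
    constructor
    · ext i j
      simp only [Matrix.transpose_apply, Matrix.of_apply]
      rcases lt_trichotomy i j with h | h | h
      · simp [h, h.not_gt]
      · simp [h]
      · simp [h, h.not_gt]
    · intro i; simp⟩
  left_inv M := by
    obtain ⟨M, h1, h2⟩ := M
    apply Subtype.ext
    ext i j
    simp only [Matrix.of_apply]
    rcases lt_trichotomy i j with h | h | h
    · simp [h]
    · subst h; simp [h2]
    · simp only [h, h.not_gt, dif_pos, dif_neg, not_false_eq_true]
      exact congrFun (congrFun h1 i) j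
  right_inv a := by
    funext p
    simp [p.2]

noncomputable def br (i j : Fin l) : MvPolynomial (Fin l × Fin 2) ℂ :=
  X (i, 0) * X (j, 1) - X (i, 1) * X (j, 0)

theorem XiL_eq (α : Matrix (Fin l) (Fin l) ℕ) :
    XiL α = ∏ p : Pr l, br p.1.1 p.1.2 ^ α p.1.1 p.1.2 := by
  rw [XiL]
  exact Finset.prod_subtype _ (fun p => by simp) (fun p : Fin l × Fin l => br p.1 p.2 ^ α p.1 p.2)

noncomputable def act (A : Fin l → Matrix (Fin 2) (Fin 2) ℂ) :
    MvPolynomial (Fin l × Fin 2) ℂ →ₐ[ℂ] MvPolynomial (Fin l × Fin 2) ℂ :=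
  MvPolynomial.aeval
    (fun v : Fin l × Fin 2 =>
      C (A v.1 0 v.2) * X (v.1, 0) + C (A v.1 1 v.2) * X (v.1, 1))

theorem XiL_star (β : Matrix (Fin l) (Fin l) ℕ) (d) : star (coeff d (XiL β)) = coeff d (XiL β) := by
  have : MvPolynomial.map (starRingEnd ℂ) (XiL β) = XiL β := by
    simp [XiL, map_prod]
  conv_rhs => rw [← this, coeff_map]
  rfl

theorem PhiL_eq (α β : Matrix (Fin l) (Fin l) ℕ) (A : Fin l → Matrix (Fin 2) (Fin 2) ℂ) :
    PhiL α β A = fB (∏ p : Pr l, act A (br p.1.1 p.1.2) ^ α p.1.1 p.1.2)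
      (∏ p : Pr l, br p.1.1 p.1.2 ^ β p.1.1 p.1.2) := by
  rw [PhiL, fockInnerL, ← XiL_eq β]
  have : ∏ p : Pr l, act A (br p.1.1 p.1.2) ^ α p.1.1 p.1.2 = actL A (XiL α) := by
    rw [XiL_eq]
    change _ = act A _
    simp only [map_prod, map_pow]
  rw [this, fB_eq]
  simp only [XiL_star]

theorem br_homog (i j : Fin l) : (br i j).IsHomogeneous 2 :=
  ((isHomogeneous_X ℂ _).mul (isHomogeneous_X ℂ _)).sub ((isHomogeneous_X ℂ _).mul (isHomogeneous_X ℂ _))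

theorem act_X (A : Fin l → Matrix (Fin 2) (Fin 2) ℂ) (v : Fin l × Fin 2) :
    act A (X v) = ∑ w, C (blockDiagU A w v) * X w := by
  rw [act, aeval_X, Fintype.sum_prod_type, Finset.sum_eq_single v.1]
  · simp [blockDiagU, Fin.sum_univ_two]
  · intro b _ hb
    simp [blockDiagU, hb]
  · simp

theorem act_X_homog (A : Fin l → Matrix (Fin 2) (Fin 2) ℂ) (v : Fin l × Fin 2) :
    (act A (X v)).IsHomogeneous 1 := by
  rw [act_X]
  refine IsHomogeneous.sum _ _ _ fun w _ => ?_
  have := (isHomogeneous_C (Fin l × Fin 2) (blockDiagU A w v)).mul (isHomogeneous_X ℂ w)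
  rwa [zero_add] at this

theorem act_br_homog (A : Fin l → Matrix (Fin 2) (Fin 2) ℂ) (i j : Fin l) :
    (act A (br i j)).IsHomogeneous 2 := by
  rw [br, map_sub, map_mul, map_mul]
  exact ((act_X_homog A _).mul (act_X_homog A _)).sub ((act_X_homog A _).mul (act_X_homog A _))

theorem quad_eq (M : Matrix (Fin l × Fin 2) (Fin l × Fin 2) ℂ) (x : Fin l × Fin 2 → MvPolynomial (Fin l × Fin 2) ℂ) :
    ∑ i, ∑ j, C (M i j) * (x i * x j) = x ⬝ᵥ (M.map C *ᵥ x) := by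
  simp only [dotProduct, Matrix.mulVec, Finset.mul_sum, Matrix.map_apply]
  exact Finset.sum_congr rfl fun i _ => Finset.sum_congr rfl fun j _ => by ring

theorem act_qf (A : Fin l → Matrix (Fin 2) (Fin 2) ℂ) (M : Matrix (Fin l × Fin 2) (Fin l × Fin 2) ℂ) :
    act A (qf M) = qf (blockDiagU A * M * (blockDiagU A).transpose) := by
  have hC : ∀ a, act A (C a) = C a := fun a => by rw [act, aeval_C]; rfl
  rw [qf, qf, map_mul, hC]
  congr 1
  simp only [map_sum, map_mul, hC]
  rw [quad_eq M (fun i => act A (X i)), quad_eq _ X]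
  have hx : (fun i => act A (X i)) = ((blockDiagU A).map C).transpose *ᵥ X := by
    funext i
    rw [act_X]
    simp [Matrix.mulVec, dotProduct]
  rw [hx, Matrix.map_mul, Matrix.map_mul, ← Matrix.mulVec_mulVec, ← Matrix.mulVec_mulVec,
    Matrix.mulVec_transpose, ← Matrix.dotProduct_mulVec, Matrix.transpose_map, Matrix.mulVec_transpose]

theorem sum_pairs {R : Type*} [CommRing R] (F : Fin l → Fin l → R) (hs : ∀ i j, F i j = F j i) (h0 : ∀ i, F i i = 0) :
    ∑ i, ∑ j, F i j = 2 * ∑ p : Pr l, F p.1.1 p.1.2 := by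
  have h1 : ∑ p : Pr l, F p.1.1 p.1.2 = ∑ p ∈ Finset.univ.filter (fun p : Fin l × Fin l => p.1 < p.2), F p.1 p.2 :=
    (Finset.sum_subtype _ (fun p => by simp) (fun p : Fin l × Fin l => F p.1 p.2)).symm
  have h2 : ∑ p ∈ Finset.univ.filter (fun p : Fin l × Fin l => p.2 < p.1), F p.1 p.2 =
      ∑ p ∈ Finset.univ.filter (fun p : Fin l × Fin l => p.1 < p.2), F p.1 p.2 := by
    refine Finset.sum_bij' (fun p _ => p.swap) (fun p _ => p.swap) ?_ ?_ ?_ ?_ ?_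
    · simp
    · simp
    · simp
    · simp
    · intro p _; exact hs _ _
  rw [h1, two_mul]
  nth_rewrite 2 [← h2]
  rw [← Finset.sum_product', Finset.univ_product_univ, Finset.sum_filter, Finset.sum_filter, ← Finset.sum_add_distrib]
  refine Finset.sum_congr rfl fun p _ => ?_
  rcases lt_trichotomy p.1 p.2 with h | h | h
  · simp [h, h.not_gt]
  · simp [h, h0]
  · simp [h, h.not_gt]

theorem qf_blockT (t : Matrix (Fin l) (Fin l) ℝ) (ht : t.transpose = -t) :
    qf (blockT t) = ∑ p : Pr l, C (t p.1.1 p.1.2 : ℂ) * br p.1.1 p.1.2 := by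
  have hs : ∀ i j, t i j = - t j i := fun i j => congrFun (congrFun ht j) i
  have h1 : ∑ i, ∑ j, C (blockT t i j) * (X i * X j : MvPolynomial (Fin l × Fin 2) ℂ) =
      ∑ i : Fin l, ∑ j : Fin l, C (t i j : ℂ) * br i j := by
    simp only [Fintype.sum_prod_type, Fin.sum_univ_two, ← Finset.sum_add_distrib]
    refine Finset.sum_congr rfl fun i _ => Finset.sum_congr rfl fun j _ => ?_
    simp [blockT, br]
    ring
  rw [qf, h1, sum_pairs (fun i j => C (t i j : ℂ) * br i j), ← mul_assoc]
  · have : (C (1/2) * 2 : MvPolynomial (Fin l × Fin 2) ℂ) = 1 := by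
      rw [show (2 : MvPolynomial (Fin l × Fin 2) ℂ) = C 2 from (map_ofNat C 2).symm, ← C_mul]; norm_num
    rw [this, one_mul]
  · intro i j
    rw [hs i j, br, br]; push_cast; rw [map_neg]; ring
  · intro i; rw [br]; ring

theorem blockT_symm (t : Matrix (Fin l) (Fin l) ℝ) (ht : t.transpose = -t) :
    (blockT t).transpose = blockT t := by
  have hs : ∀ i j, t i j = - t j i := fun i j => congrFun (congrFun ht j) i
  ext ⟨i, a⟩ ⟨j, b⟩
  simp only [blockT, Matrix.transpose_apply, Matrix.of_apply]
  rw [hs i j]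
  fin_cases a <;> fin_cases b <;> simp

end matching

/-- generating function for the matrix coefficients `Φ[α,β]` on
`SU(2)×⋯×SU(2)` (`l` factors): for skew-symmetric real matrices `𝐓, 𝐓'` with sufficiently
small entries, the series
`S = Σ_{α,β} (∏_{i<j} t_{ij}^{α_{ij}} t'_{ij}^{β_{ij}}/(α_{ij}!·β_{ij}!)) Φ[α,β]`
converges and `S = det(1 − U·T·Uᵗ·T')^{−1/2}`. -/
theorem generating_function_multi (l : ℕ) (hl : 2 ≤ l)
    (A : Fin l → Matrix.specialUnitaryGroup (Fin 2) ℂ) :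
    ∃ ε > (0 : ℝ), ∀ t t' : Matrix (Fin l) (Fin l) ℝ,
      t.transpose = -t → t'.transpose = -t' →
      (∀ i j, |t i j| < ε) → (∀ i j, |t' i j| < ε) →
      ∃ S : ℂ,
        HasSum
          (fun ab : SymZeroDiag l × SymZeroDiag l =>
            ((∏ p ∈ Finset.univ.filter (fun p : Fin l × Fin l => p.1 < p.2),
              t p.1 p.2 ^ ab.1.val p.1 p.2 * t' p.1 p.2 ^ ab.2.val p.1 p.2 /
                ((ab.1.val p.1 p.2).factorial * (ab.2.val p.1 p.2).factorial : ℕ) : ℝ) : ℂ)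
              * PhiL ab.1.val ab.2.val (fun j => (A j : Matrix (Fin 2) (Fin 2) ℂ)))
          S ∧
        S ^ 2 *
          Matrix.det
            ((1 : Matrix (Fin l × Fin 2) (Fin l × Fin 2) ℂ) -
              blockDiagU (fun j => (A j : Matrix (Fin 2) (Fin 2) ℂ)) * blockT t *
                (blockDiagU (fun j => (A j : Matrix (Fin 2) (Fin 2) ℂ))).transpose *
                blockT t')
          = 1 := by
  set A' : Fin l → Matrix (Fin 2) (Fin 2) ℂ := fun j => (A j : Matrix (Fin 2) (Fin 2) ℂ) with hA'
  obtain ⟨ε, hε, H⟩ := term_summable (fun p : Pr l => act A' (br p.1.1 p.1.2)) (fun p : Pr l => br p.1.1 p.1.2)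
    (fun p => act_br_homog A' _ _) (fun p => br_homog _ _)
  refine ⟨ε, hε, fun t t' ht ht' hte hte' => ?_⟩
  have hs := H (fun p => (t p.1.1 p.1.2 : ℂ)) (fun p => (t' p.1.1 p.1.2 : ℂ))
    (fun p => by rw [Complex.norm_real]; exact (hte _ _).le)
    (fun p => by rw [Complex.norm_real]; exact (hte' _ _).le)
  have hM : qf (blockDiagU A' * blockT t * (blockDiagU A').transpose)
      = ∑ p : Pr l, C (t p.1.1 p.1.2 : ℂ) * act A' (br p.1.1 p.1.2) := by
    rw [← act_qf, qf_blockT t ht, map_sum]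
    refine Finset.sum_congr rfl fun p _ => ?_
    rw [map_mul]
    congr 1
    rw [act, aeval_C]; rfl
  obtain ⟨h1, h2⟩ := term_hasSum _ _ (fun p => act_br_homog A' _ _) (fun p => br_homog _ _) _ _ hs _ _ hM
    (qf_blockT t' ht')
  refine ⟨_, ?_, Pc_final _ _ ?_ (blockT_symm t' ht') h1⟩
  · rw [← ((szEquiv l).prodCongr (szEquiv l)).hasSum_iff] at h2
    convert h2 using 1
    funext ab
    rw [PhiL_eq]
    simp only [Function.comp_apply, term]
    congr 1
    rw [Finset.prod_subtype (p := fun p : Fin l × Fin l => p.1 < p.2) _ (fun p => by simp)]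
    push_cast
    rfl
  · rw [Matrix.transpose_mul, Matrix.transpose_mul, Matrix.transpose_transpose, blockT_symm t ht, mul_assoc]
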